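/- Let d ≥ 1, let H_{B₂} and H_R be finite-dimensional complex Hilbert spaces, and let ψ ∈ ℂ^d_A ⊗ (ℂ^d_{B₁} ⊗ H_{B₂}) ⊗ H_R be a unit vector of the form ψ = ∑_{x=0}^{d−1} √q_x |x̃⟩_A ⊗ |x̃⟩_{B₁} ⊗ |ϑ_x⟩_{B₂R}, where q is a probability distribution on {0,…,d−1} and the |ϑ_x⟩ ∈ H_{B₂} ⊗ H_R are unit vectors (this expresses the condition H(X^A|B) = 0). If p_secure(X^A|R) ≤ ε for some ε ≥ 0, then there exists a POVM (Λ_z)_{z=0}^{d−1} on H_B = ℂ^d_{B₁} ⊗ H_{B₂} with guessing probability ∑_z ⟨ψ| (|z⟩⟨z| ⊗ Λ_z ⊗ 1_R) |ψ⟩ ≥ 1 − √(2ε). -/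

import Mathlib

open Matrix BigOperators Finset
open scoped Classical ComplexOrder

noncomputable section

/-- The positive semidefinite square root of a matrix (zero if the matrix is not PSD). -/
def psdSqrt {ι : Type*} [Fintype ι] [DecidableEq ι] (M : Matrix ι ι ℂ) : Matrix ι ι ℂ :=
  if h : M.PosSemidef then
    (h.1.eigenvectorUnitary : Matrix ι ι ℂ) *
      diagonal (((↑) : ℝ → ℂ) ∘ Real.sqrt ∘ h.1.eigenvalues) *
      (star h.1.eigenvectorUnitary : Matrix ι ι ℂ)
  else 0

/-- Trace norm ‖M‖₁ = Tr √(M†M). -/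
def traceNorm {ι : Type*} [Fintype ι] [DecidableEq ι] (M : Matrix ι ι ℂ) : ℝ :=
  ((psdSqrt (Mᴴ * M)).trace).re

/-- Trace distance D(ρ,σ) = ‖ρ−σ‖₁/2. -/
def traceDist {ι : Type*} [Fintype ι] [DecidableEq ι] (ρ σ : Matrix ι ι ℂ) : ℝ :=
  traceNorm (ρ - σ) / 2

/-- Fidelity F(ρ,σ) = ‖√ρ√σ‖₁. -/
def fidelity {ι : Type*} [Fintype ι] [DecidableEq ι] (ρ σ : Matrix ι ι ℂ) : ℝ :=
  traceNorm (psdSqrt ρ * psdSqrt σ)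

/-- ω = exp(2πi/d). -/
def omega (d : ℕ) : ℂ := Complex.exp (2 * Real.pi * Complex.I / d)

/-- Conjugate (X) basis vector |x̃⟩ of ℂ^d, component at z: ω^{−xz}/√d. -/
def xVec (d : ℕ) (x z : Fin d) : ℂ :=
  (starRingEnd ℂ) (omega d ^ (x.val * z.val)) / (Real.sqrt d : ℂ)

/-- Component of (⟨x̃|⊗1_{BR})|ψ⟩. -/
def condVecX {d : ℕ} {β r : Type*} [Fintype β] [Fintype r]
    (ψ : Fin d × β × r → ℂ) (x : Fin d) (p : β × r) : ℂ :=
  ∑ z, (starRingEnd ℂ) (xVec d x z) * ψ (z, p.1, p.2)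

/-- Unnormalized conditional state ϑ_x^R = Tr_B[(⟨x̃|⊗1)|ψ⟩⟨ψ|(|x̃⟩⊗1)]. -/
def thetaR {d : ℕ} {β r : Type*} [Fintype β] [Fintype r]
    (ψ : Fin d × β × r → ℂ) (x : Fin d) : Matrix r r ℂ :=
  Matrix.of fun s s' => ∑ b, condVecX ψ x (b, s) * (starRingEnd ℂ) (condVecX ψ x (b, s'))

/-- X-measured cq marginal ψ̄_X^{AR} = ∑_x |x̃⟩⟨x̃| ⊗ ϑ_x^R. -/
def cqMarginalX {d : ℕ} {β r : Type*} [Fintype β] [Fintype r]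
    (ψ : Fin d × β × r → ℂ) : Matrix (Fin d × r) (Fin d × r) ℂ :=
  Matrix.of fun p q =>
    ∑ x, xVec d x p.1 * (starRingEnd ℂ) (xVec d x q.1) * thetaR ψ x p.2 q.2

/-- Reduced state ψ^R = Tr_{AB}|ψ⟩⟨ψ|. -/
def reducedR {α β r : Type*} [Fintype α] [Fintype β] [Fintype r]
    (ψ : α × β × r → ℂ) : Matrix r r ℂ :=
  Matrix.of fun s s' => ∑ z, ∑ b, ψ (z, b, s) * (starRingEnd ℂ) (ψ (z, b, s'))

/-- The ideal key state (1/d) 1_A ⊗ ψ^R. -/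
def idealKey {d : ℕ} {β r : Type*} [Fintype β] [Fintype r]
    (ψ : Fin d × β × r → ℂ) : Matrix (Fin d × r) (Fin d × r) ℂ :=
  Matrix.of fun p q => (if p.1 = q.1 then ((d : ℂ))⁻¹ else 0) * reducedR ψ p.2 q.2

/-- Security parameter p_secure(X^A|R) = D(ψ̄_X^{AR}, (1/d)1⊗ψ^R). -/
def pSecure {d : ℕ} {β r : Type*} [Fintype β] [DecidableEq β] [Fintype r] [DecidableEq r]
    (ψ : Fin d × β × r → ℂ) : ℝ :=
  traceDist (cqMarginalX ψ) (idealKey ψ)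

/-- Guessing probability ∑_z ⟨ψ|(|z⟩⟨z| ⊗ Λ_z ⊗ 1_R)|ψ⟩. -/
def pGuess {d : ℕ} {β r : Type*} [Fintype β] [Fintype r]
    (ψ : Fin d × β × r → ℂ) (Λ : Fin d → Matrix β β ℂ) : ℝ :=
  (∑ z, ∑ b, ∑ b', ∑ s, (starRingEnd ℂ) (ψ (z, b, s)) * Λ z b b' * ψ (z, b', s)).re

end

namespace Matrix

theorem conjTranspose_mul_self_apply_diag {m n : Type*} [Fintype m] (M : Matrix m n ℂ) (i : n) :
    (Mᴴ * M) i i = ((∑ j, ‖M j i‖ ^ 2 : ℝ) : ℂ) := by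
  rw [mul_apply]
  push_cast
  refine Finset.sum_congr rfl fun j _ => ?_
  rw [conjTranspose_apply, ← Complex.conj_mul']
  rfl

theorem mul_conjTranspose_self_apply_diag {m n : Type*} [Fintype n] (M : Matrix m n ℂ) (i : m) :
    (M * Mᴴ) i i = ((∑ j, ‖M i j‖ ^ 2 : ℝ) : ℂ) := by
  rw [mul_apply]
  push_cast
  refine Finset.sum_congr rfl fun j _ => ?_
  rw [conjTranspose_apply, ← Complex.mul_conj']
  rfl

theorem norm_sum_mul_le_sqrt_mul_sqrt {m : Type*} [Fintype m] (a b : m → ℂ) :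
    ‖∑ i, a i * b i‖ ≤ Real.sqrt (∑ i, ‖a i‖ ^ 2) * Real.sqrt (∑ i, ‖b i‖ ^ 2) := by
  refine (norm_sum_le _ _).trans ?_
  simp only [norm_mul]
  exact Real.sum_mul_le_sqrt_mul_sqrt _ _ _

variable {ι κ : Type*} [Fintype ι] [DecidableEq ι] [Fintype κ]

theorem mul_diagonal_mul_mul {U : Matrix ι ι ℂ} (hU : Uᴴ * U = 1) (f g : ι → ℂ) :
    (U * diagonal f * Uᴴ) * (U * diagonal g * Uᴴ) = U * diagonal (fun i => f i * g i) * Uᴴ := by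
  calc (U * diagonal f * Uᴴ) * (U * diagonal g * Uᴴ)
      = U * diagonal f * (Uᴴ * U) * diagonal g * Uᴴ := by simp only [Matrix.mul_assoc]
    _ = _ := by rw [hU, Matrix.mul_one, Matrix.mul_assoc U, diagonal_mul_diagonal]

theorem posSemidef_mul_diagonal_mul (U : Matrix ι ι ℂ) {f : ι → ℂ} (hf : ∀ i, 0 ≤ f i) :
    (U * diagonal f * Uᴴ).PosSemidef :=
  (PosSemidef.diagonal (d := f) hf).mul_mul_conjTranspose_same U

theorem IsHermitian.eigenvectorUnitary_conjTranspose_mul {A : Matrix ι ι ℂ} (hA : A.IsHermitian) :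
    (hA.eigenvectorUnitary : Matrix ι ι ℂ)ᴴ * (hA.eigenvectorUnitary : Matrix ι ι ℂ) = 1 :=
  Unitary.coe_star_mul_self hA.eigenvectorUnitary

theorem IsHermitian.eigenvectorUnitary_mul_conjTranspose {A : Matrix ι ι ℂ} (hA : A.IsHermitian) :
    (hA.eigenvectorUnitary : Matrix ι ι ℂ) * (hA.eigenvectorUnitary : Matrix ι ι ℂ)ᴴ = 1 :=
  Unitary.coe_mul_star_self hA.eigenvectorUnitary

theorem IsHermitian.eq_mul_diagonal_mul {A : Matrix ι ι ℂ} (hA : A.IsHermitian) :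
    A = (hA.eigenvectorUnitary : Matrix ι ι ℂ) * diagonal (fun i => (hA.eigenvalues i : ℂ)) *
      (hA.eigenvectorUnitary : Matrix ι ι ℂ)ᴴ :=
  hA.spectral_theorem

theorem psdSqrt_eq {M : Matrix ι ι ℂ} (h : M.PosSemidef) :
    psdSqrt M = (h.1.eigenvectorUnitary : Matrix ι ι ℂ) *
      diagonal (fun i => (Real.sqrt (h.1.eigenvalues i) : ℂ)) *
      (h.1.eigenvectorUnitary : Matrix ι ι ℂ)ᴴ := by
  rw [psdSqrt, dif_pos h]
  rfl

theorem posSemidef_psdSqrt {M : Matrix ι ι ℂ} (h : M.PosSemidef) : (psdSqrt M).PosSemidef := by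
  rw [psdSqrt_eq h]
  exact posSemidef_mul_diagonal_mul _ fun i => by
    exact_mod_cast Real.sqrt_nonneg (h.1.eigenvalues i)

theorem psdSqrt_mul_self {M : Matrix ι ι ℂ} (h : M.PosSemidef) : psdSqrt M * psdSqrt M = M := by
  rw [psdSqrt_eq h, mul_diagonal_mul_mul h.1.eigenvectorUnitary_conjTranspose_mul]
  conv_rhs => rw [h.1.eq_mul_diagonal_mul]
  congr 3
  funext i
  exact_mod_cast Real.mul_self_sqrt (h.eigenvalues_nonneg i)

/-- One half of the variational characterisation of the trace norm. -/
theorem re_trace_mul_le_traceNorm {S : Matrix ι ι ℂ} (hS : S * Sᴴ = 1) (M : Matrix ι ι ℂ) :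
    (S * M).trace.re ≤ traceNorm M := by
  have h : (Mᴴ * M).PosSemidef := posSemidef_conjTranspose_mul_self M
  have hU := h.1.eigenvectorUnitary_conjTranspose_mul
  have hU' := h.1.eigenvectorUnitary_mul_conjTranspose
  have hspec := h.1.eq_mul_diagonal_mul
  have hnorm : traceNorm M = ∑ i, Real.sqrt (h.1.eigenvalues i) := by
    rw [traceNorm, psdSqrt_eq h, trace_mul_comm, ← Matrix.mul_assoc, hU, Matrix.one_mul,
      trace_diagonal]
    simp
  rw [hnorm]
  generalize h.1.eigenvalues = l at *
  generalize (h.1.eigenvectorUnitary : Matrix ι ι ℂ) = U at *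
  have htr : (S * M).trace = ∑ i, ∑ j, (Uᴴ * S) i j * (M * U) j i := by
    calc (S * M).trace = (S * M * (U * Uᴴ)).trace := by rw [hU', Matrix.mul_one]
      _ = ((Uᴴ * S) * (M * U)).trace := by
        rw [← Matrix.mul_assoc, trace_mul_comm]
        simp only [Matrix.mul_assoc]
      _ = _ := by simp only [trace, diag_apply, mul_apply (M := Uᴴ * S)]
  rw [htr, Complex.re_sum]
  refine Finset.sum_le_sum fun i _ => ?_
  have h1 : ∑ j, ‖(Uᴴ * S) i j‖ ^ 2 = 1 := by
    have := mul_conjTranspose_self_apply_diag (Uᴴ * S) i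
    rw [conjTranspose_mul, conjTranspose_conjTranspose, Matrix.mul_assoc,
      ← Matrix.mul_assoc S, hS, Matrix.one_mul, hU, one_apply_eq] at this
    exact_mod_cast this.symm
  have h2 : ∑ j, ‖(M * U) j i‖ ^ 2 = l i := by
    have := conjTranspose_mul_self_apply_diag (M * U) i
    rw [conjTranspose_mul, Matrix.mul_assoc, ← Matrix.mul_assoc Mᴴ, hspec] at this
    have e : Uᴴ * (U * diagonal (fun i => (l i : ℂ)) * Uᴴ * U) =
        (Uᴴ * U) * diagonal (fun i => (l i : ℂ)) * (Uᴴ * U) := by simp only [Matrix.mul_assoc]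
    rw [e, hU, Matrix.one_mul, Matrix.mul_one, diagonal_apply_eq] at this
    exact_mod_cast this.symm
  refine (Complex.re_le_norm _).trans ((norm_sum_mul_le_sqrt_mul_sqrt _ _).trans ?_)
  rw [h1, h2, Real.sqrt_one, one_mul]

/-- A Hermitian matrix `T` has a Hermitian unitary sign `S`, so that `S * T = |T|`. -/
theorem IsHermitian.exists_sign {T : Matrix ι ι ℂ} (hT : T.IsHermitian) :
    ∃ S : Matrix ι ι ℂ, S * Sᴴ = 1 ∧ S * T = T * S ∧
      (S * T - T).PosSemidef ∧ (S * T + T).PosSemidef := by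
  have hU := hT.eigenvectorUnitary_conjTranspose_mul
  have hU' := hT.eigenvectorUnitary_mul_conjTranspose
  have hspec := hT.eq_mul_diagonal_mul
  generalize hT.eigenvalues = l at *
  generalize (hT.eigenvectorUnitary : Matrix ι ι ℂ) = U at *
  let s : ι → ℂ := fun i => if 0 ≤ l i then 1 else -1
  have hs : ∀ i, s i * l i = (|l i| : ℝ) := fun i => by
    by_cases h : 0 ≤ l i
    · simp [s, h, abs_of_nonneg h]
    · simp [s, h, abs_of_neg (not_le.mp h)]
  have hST : U * diagonal s * Uᴴ * T = U * diagonal (fun i => ((|l i| : ℝ) : ℂ)) * Uᴴ := by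
    rw [hspec, mul_diagonal_mul_mul hU]
    simp only [hs]
  refine ⟨U * diagonal s * Uᴴ, ?_, ?_, ?_, ?_⟩
  · have : (U * diagonal s * Uᴴ)ᴴ = U * diagonal s * Uᴴ := by
      rw [conjTranspose_mul, conjTranspose_mul, conjTranspose_conjTranspose,
        diagonal_conjTranspose, ← Matrix.mul_assoc]
      congr 3
      funext i
      simp only [Pi.star_apply, s]
      split_ifs <;> simp
    rw [this, mul_diagonal_mul_mul hU]
    have h1 : (fun i => s i * s i) = fun _ => (1 : ℂ) := by
      funext i
      simp only [s]
      split_ifs <;> simp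
    rw [h1, diagonal_one, Matrix.mul_one, hU']
  · rw [hspec, mul_diagonal_mul_mul hU, mul_diagonal_mul_mul hU]
    simp only [mul_comm]
  · rw [hST, hspec, ← Matrix.sub_mul, ← Matrix.mul_sub, diagonal_sub]
    refine posSemidef_mul_diagonal_mul _ fun i => ?_
    exact_mod_cast sub_nonneg.mpr (le_abs_self (l i))
  · rw [hST, hspec, ← Matrix.add_mul, ← Matrix.mul_add, diagonal_add]
    refine posSemidef_mul_diagonal_mul _ fun i => ?_
    exact_mod_cast neg_le_iff_add_nonneg.mp (neg_abs_le (l i)) |>.trans_eq (add_comm _ _)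

theorem PosSemidef.re_trace_mul_nonneg {A B : Matrix ι ι ℂ} (hA : A.PosSemidef)
    (hB : B.PosSemidef) : 0 ≤ (A * B).trace.re := by
  have h : (A * B).trace = ((psdSqrt B)ᴴ * A * psdSqrt B).trace := by
    rw [(posSemidef_psdSqrt hB).1, trace_mul_cycle, psdSqrt_mul_self hB, trace_mul_comm]
  rw [h]
  exact (Complex.le_def.mp (hA.conjTranspose_mul_mul_same (psdSqrt B)).trace_nonneg).1

/-- The Powers–Størmer inequality. -/
theorem PosSemidef.re_trace_sub_sq_le_traceNorm {A B : Matrix ι ι ℂ} (hA : A.PosSemidef)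
    (hB : B.PosSemidef) : ((A - B) * (A - B)).trace.re ≤ traceNorm (A * A - B * B) := by
  obtain ⟨S, hS, hcomm, hneg, hpos⟩ := (hA.1.sub hB.1).exists_sign
  refine le_trans ?_ (re_trace_mul_le_traceNorm hS _)
  have h1 := hneg.re_trace_mul_nonneg hA
  have h2 := hpos.re_trace_mul_nonneg hB
  set T := A - B with hT
  have h3 : (S * (A * A - B * B)).trace = (S * T * A).trace + (S * T * B).trace := by
    have e : S * (A * A - B * B) = S * T * A + S * B * T := by rw [hT]; noncomm_ring
    rw [e, trace_add]
    congr 1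
    rw [trace_mul_comm, ← Matrix.mul_assoc, ← hcomm]
  have h4 : (T * T).trace = (T * A).trace - (T * B).trace := by
    conv_lhs => rw [hT, ← hT, Matrix.mul_sub, trace_sub]
  rw [h3, h4, Complex.add_re, Complex.sub_re]
  rw [Matrix.sub_mul, trace_sub, Complex.sub_re] at h1
  rw [Matrix.add_mul, trace_add, Complex.add_re] at h2
  linarith

/-- Polar decomposition: a contraction on the right turns `N` into `√(N Nᴴ)`. -/
theorem exists_mul_eq_psdSqrt [DecidableEq κ] (N : Matrix ι κ ℂ) :
    ∃ C : Matrix κ ι ℂ, N * C = psdSqrt (N * Nᴴ) ∧ (1 - C * Cᴴ).PosSemidef := by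
  have h : (N * Nᴴ).PosSemidef := posSemidef_self_mul_conjTranspose N
  rw [psdSqrt_eq h]
  have hU := h.1.eigenvectorUnitary_conjTranspose_mul
  have hspec := h.1.eq_mul_diagonal_mul
  have hl := h.eigenvalues_nonneg
  generalize h.1.eigenvalues = l at *
  generalize (h.1.eigenvectorUnitary : Matrix ι ι ℂ) = U at *
  let P : Matrix ι ι ℂ := U * diagonal (fun i => (((Real.sqrt (l i))⁻¹ : ℝ) : ℂ)) * Uᴴ
  have hPH : Pᴴ = P :=
    (posSemidef_mul_diagonal_mul U fun i => by
      exact_mod_cast inv_nonneg.mpr (Real.sqrt_nonneg (l i))).1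
  have hPPP : P * (N * Nᴴ) * (P * P) = P := by
    rw [hspec]
    simp only [P]
    rw [mul_diagonal_mul_mul hU, mul_diagonal_mul_mul hU, mul_diagonal_mul_mul hU]
    congr 3
    funext i
    norm_cast
    rcases (hl i).eq_or_lt with h0 | h0
    · simp [← h0]
    · have := Real.sqrt_pos.mpr h0
      have h2 := Real.mul_self_sqrt h0.le
      generalize Real.sqrt (l i) = t at *
      rw [← h2]
      field_simp
  refine ⟨Nᴴ * P, ?_, ?_⟩
  · rw [← Matrix.mul_assoc, hspec]
    simp only [P]
    rw [mul_diagonal_mul_mul hU]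
    congr 3
    funext i
    norm_cast
    rw [← div_eq_mul_inv, Real.div_sqrt]
  · have hH : Nᴴ * P * (Nᴴ * P)ᴴ = Nᴴ * (P * P) * N := by
      rw [conjTranspose_mul, conjTranspose_conjTranspose, hPH]
      simp only [Matrix.mul_assoc]
    have hself : (Nᴴ * (P * P) * N)ᴴ = Nᴴ * (P * P) * N := by
      rw [← hH]
      exact (posSemidef_self_mul_conjTranspose _).1
    have hidem : (Nᴴ * (P * P) * N) * (Nᴴ * (P * P) * N) = Nᴴ * (P * P) * N := by
      calc (Nᴴ * (P * P) * N) * (Nᴴ * (P * P) * N)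
          = Nᴴ * P * (P * (N * Nᴴ) * (P * P)) * N := by simp only [Matrix.mul_assoc]
        _ = _ := by rw [hPPP]; simp only [Matrix.mul_assoc]
    rw [hH]
    generalize Nᴴ * (P * P) * N = Q at *
    have : 1 - Q = (1 - Q)ᴴ * (1 - Q) := by
      rw [conjTranspose_sub, conjTranspose_one, hself, Matrix.sub_mul, Matrix.mul_sub,
        Matrix.mul_sub, hidem]
      simp
    rw [this]
    exact posSemidef_conjTranspose_mul_self _

end Matrix

section XBasis

open scoped Kronecker

variable {d : ℕ}

theorem xVec_mul_conj_self (hd : 1 ≤ d) (x z : Fin d) :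
    xVec d x z * (starRingEnd ℂ) (xVec d x z) = (d : ℂ)⁻¹ := by
  have hω : ‖omega d‖ = 1 :=
    (Complex.isPrimitiveRoot_exp d (by lia)).norm'_eq_one (by lia)
  rw [Complex.mul_conj', xVec, norm_div, RCLike.norm_conj, norm_pow, hω, Complex.norm_real,
    Real.norm_of_nonneg (Real.sqrt_nonneg _), one_pow, one_div, ← Complex.ofReal_pow, inv_pow,
    Real.sq_sqrt (Nat.cast_nonneg d)]
  simp

theorem sum_xVec_mul_conj (hd : 1 ≤ d) (x y : Fin d) :
    ∑ z, xVec d x z * (starRingEnd ℂ) (xVec d y z) = if x = y then 1 else 0 := by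
  have hd0 : (d : ℂ) ≠ 0 := by exact_mod_cast (by lia : d ≠ 0)
  split_ifs with hxy
  · subst hxy
    simp [xVec_mul_conj_self hd, hd0]
  · have hω : IsPrimitiveRoot (omega d) d := Complex.isPrimitiveRoot_exp d (by lia)
    have hconj : (starRingEnd ℂ) (omega d) = (omega d)⁻¹ :=
      (Complex.inv_eq_conj (hω.norm'_eq_one (by lia))).symm
    have hω0 : omega d ≠ 0 := hω.ne_zero (by lia)
    set ζ : ℂ := omega d ^ (y : ℕ) * (omega d ^ (x : ℕ))⁻¹ with hζ
    have hterm : ∀ z : Fin d, xVec d x z * (starRingEnd ℂ) (xVec d y z) =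
        ζ ^ (z : ℕ) * ((Real.sqrt d : ℂ)⁻¹ * (Real.sqrt d : ℂ)⁻¹) := fun z => by
      simp only [xVec, map_div₀, Complex.conj_conj, Complex.conj_ofReal]
      simp only [map_pow, hconj, hζ, div_eq_mul_inv, mul_pow, inv_pow, pow_mul]
      ring
    have hζ1 : ζ - 1 ≠ 0 := fun h => hxy <| by
      rw [sub_eq_zero, hζ, mul_inv_eq_one₀ (pow_ne_zero _ hω0)] at h
      exact (Fin.ext (hω.pow_inj y.2 x.2 h)).symm
    have hζd : ζ ^ d = 1 := by
      rw [hζ, mul_pow, inv_pow, pow_right_comm _ _ d, pow_right_comm _ _ d, hω.pow_eq_one]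
      simp
    have hgeom : ∑ z : Fin d, ζ ^ (z : ℕ) = 0 := by
      rw [Fin.sum_univ_eq_sum_range (fun i => ζ ^ i)]
      have := geom_sum_mul ζ d
      rw [hζd, sub_self] at this
      exact (mul_eq_zero.mp this).resolve_right hζ1
    simp only [hterm, ← Finset.sum_mul, hgeom, zero_mul]

theorem xVec_mul_conjTranspose (hd : 1 ≤ d) :
    Matrix.of (xVec d) * (Matrix.of (xVec d))ᴴ = 1 := by
  ext x y
  rw [Matrix.mul_apply, Matrix.one_apply, ← sum_xVec_mul_conj hd x y]
  rfl

theorem sum_conj_xVec_mul (hd : 1 ≤ d) (z w : Fin d) :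
    ∑ x, (starRingEnd ℂ) (xVec d x z) * xVec d x w = if z = w then 1 else 0 := by
  have h : ((Matrix.of (xVec d))ᴴ * Matrix.of (xVec d)) z w = (1 : Matrix _ _ ℂ) z w := by
    rw [mul_eq_one_comm.mp (xVec_mul_conjTranspose hd)]
  rw [Matrix.mul_apply, Matrix.one_apply] at h
  exact h

theorem Matrix.mulVec_dotProduct_mulVec_of_transpose_mul_eq_one {m n : Type*} [Fintype m]
    [Fintype n] [DecidableEq n] {U V : Matrix m n ℂ} (h : Uᵀ * V = 1) (a b : n → ℂ) :
    (U *ᵥ a) ⬝ᵥ (V *ᵥ b) = a ⬝ᵥ b := by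
  rw [Matrix.dotProduct_mulVec, ← Matrix.vecMul_transpose, Matrix.vecMul_vecMul, h,
    Matrix.vecMul_one]

/-- Parseval's identity for expansions in the conjugate basis. -/
theorem sum_xVec_expansion_mul (hd : 1 ≤ d) (a b : Fin d → ℂ) :
    ∑ z, (∑ x, xVec d x z * a x) * (∑ x, (starRingEnd ℂ) (xVec d x z) * b x) =
      ∑ x, a x * b x :=
  Matrix.mulVec_dotProduct_mulVec_of_transpose_mul_eq_one
    (U := (Matrix.of (xVec d))ᵀ) (V := (Matrix.of (xVec d))ᴴ) (xVec_mul_conjTranspose hd) a b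

/-- Parseval's identity for coefficients with respect to the conjugate basis. -/
theorem sum_xVec_coefficient_mul (hd : 1 ≤ d) (a b : Fin d → ℂ) :
    ∑ x, (∑ z, (starRingEnd ℂ) (xVec d x z) * a z) * (∑ z, xVec d x z * b z) =
      ∑ z, a z * b z :=
  Matrix.mulVec_dotProduct_mulVec_of_transpose_mul_eq_one
    (U := ((Matrix.of (xVec d))ᴴ)ᵀ) (V := Matrix.of (xVec d))
    (mul_eq_one_comm.mp (xVec_mul_conjTranspose hd)) a b

variable {n : Type*}

/-- The projection `|x̃⟩⟨x̃|` onto a conjugate basis vector. -/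
noncomputable def xProj (d : ℕ) (x : Fin d) : Matrix (Fin d) (Fin d) ℂ :=
  Matrix.vecMulVec (xVec d x) (star (xVec d x))

/-- The block matrix `∑ x, |x̃⟩⟨x̃| ⊗ R x`. -/
noncomputable def xBlock (R : Fin d → Matrix n n ℂ) : Matrix (Fin d × n) (Fin d × n) ℂ :=
  ∑ x, xProj d x ⊗ₖ R x

theorem xBlock_apply (R : Fin d → Matrix n n ℂ) (p p' : Fin d × n) :
    xBlock R p p' = ∑ x, xVec d x p.1 * (starRingEnd ℂ) (xVec d x p'.1) * R x p.2 p'.2 := by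
  rw [xBlock, Matrix.sum_apply]
  rfl

theorem xProj_mul_xProj (hd : 1 ≤ d) (x y : Fin d) :
    xProj d x * xProj d y = if x = y then xProj d x else 0 := by
  rw [xProj, xProj, Matrix.vecMulVec_mul_vecMulVec]
  have h : star (xVec d x) ⬝ᵥ xVec d y = if x = y then 1 else 0 := by
    rw [dotProduct_comm]
    exact (sum_xVec_mul_conj hd y x).trans (by simp only [eq_comm])
  rw [h]
  split_ifs with hxy
  · subst hxy
    simp
  · simp

theorem sum_xProj (hd : 1 ≤ d) : ∑ x, xProj d x = 1 := by
  ext z w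
  rw [Matrix.sum_apply, Matrix.one_apply]
  refine Eq.trans ?_ ((sum_conj_xVec_mul hd w z).trans (by simp only [eq_comm]))
  exact Finset.sum_congr rfl fun x _ => mul_comm _ _

theorem trace_xProj (hd : 1 ≤ d) (x : Fin d) : (xProj d x).trace = 1 := by
  rw [xProj, Matrix.trace_vecMulVec]
  exact (sum_xVec_mul_conj hd x x).trans (if_pos rfl)

theorem xBlock_const (hd : 1 ≤ d) (M : Matrix n n ℂ) :
    xBlock (fun _ : Fin d => M) = (1 : Matrix (Fin d) (Fin d) ℂ) ⊗ₖ M := by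
  ext p p'
  rw [xBlock, Matrix.sum_apply, ← sum_xProj hd]
  simp only [Matrix.kroneckerMap_apply, Matrix.sum_apply, Finset.sum_mul]

theorem xBlock_sub (R S : Fin d → Matrix n n ℂ) :
    xBlock R - xBlock S = xBlock fun x => R x - S x := by
  ext p p'
  simp only [Matrix.sub_apply, xBlock_apply, ← Finset.sum_sub_distrib, mul_sub]

variable [Fintype n]

theorem xBlock_mul (hd : 1 ≤ d) (R S : Fin d → Matrix n n ℂ) :
    xBlock R * xBlock S = xBlock fun x => R x * S x := by
  simp only [xBlock, Matrix.sum_mul, Matrix.mul_sum, ← Matrix.mul_kronecker_mul,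
    xProj_mul_xProj hd]
  refine Finset.sum_congr rfl fun x _ => ?_
  rw [Finset.sum_eq_single x]
  · simp
  · intro y _ hy
    simp [hy]
  · simp

theorem trace_xBlock (hd : 1 ≤ d) (R : Fin d → Matrix n n ℂ) :
    (xBlock R).trace = ∑ x, (R x).trace := by
  simp only [xBlock, Matrix.trace_sum, Matrix.trace_kronecker, trace_xProj hd, one_mul]

theorem posSemidef_xBlock {R : Fin d → Matrix n n ℂ} (hR : ∀ x, (R x).PosSemidef) :
    (xBlock R).PosSemidef :=
  Matrix.posSemidef_sum _ fun x _ =>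
    (Matrix.posSemidef_vecMulVec_self_star (xVec d x)).kronecker (hR x)

end XBasis

section Security

variable {d : ℕ} {β r : Type*} [Fintype β] [Fintype r]

theorem cqMarginalX_eq_xBlock (ψ : Fin d × β × r → ℂ) :
    cqMarginalX ψ = xBlock (thetaR ψ) := by
  ext p p'
  rw [xBlock_apply]
  rfl

theorem idealKey_eq_xBlock (hd : 1 ≤ d) (ψ : Fin d × β × r → ℂ) :
    idealKey ψ = xBlock fun _ => (d : ℂ)⁻¹ • reducedR ψ := by
  rw [xBlock_const hd]
  ext p p'
  simp [idealKey, Matrix.one_apply]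

theorem sum_thetaR (hd : 1 ≤ d) (ψ : Fin d × β × r → ℂ) :
    ∑ x, thetaR ψ x = reducedR ψ := by
  ext s s'
  rw [Matrix.sum_apply]
  simp only [thetaR, reducedR, Matrix.of_apply]
  rw [Finset.sum_comm]
  conv_rhs => rw [Finset.sum_comm]
  refine Finset.sum_congr rfl fun b _ => ?_
  refine Eq.trans ?_ (sum_xVec_coefficient_mul hd (fun z => ψ (z, b, s))
    fun z => (starRingEnd ℂ) (ψ (z, b, s')))
  simp only [condVecX, map_sum, map_mul, Complex.conj_conj]

theorem posSemidef_thetaR (ψ : Fin d × β × r → ℂ) (x : Fin d) : (thetaR ψ x).PosSemidef :=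
  Matrix.posSemidef_self_mul_conjTranspose (Matrix.of fun s b => condVecX ψ x (b, s))

theorem posSemidef_reducedR (hd : 1 ≤ d) (ψ : Fin d × β × r → ℂ) : (reducedR ψ).PosSemidef := by
  rw [← sum_thetaR hd]
  exact Matrix.posSemidef_sum _ fun x _ => posSemidef_thetaR ψ x

/-- Security bounds from below the overlap of the square roots of the conditional states with
the square root of the reduced state. -/
theorem one_sub_pSecure_le [DecidableEq β] [DecidableEq r] (hd : 1 ≤ d)
    (ψ : Fin d × β × r → ℂ) (htr : (reducedR ψ).trace = 1) :
    1 - pSecure ψ ≤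
      (Real.sqrt d)⁻¹ * ((∑ x, psdSqrt (thetaR ψ x)) * psdSqrt (reducedR ψ)).trace.re := by
  have hρ := posSemidef_reducedR hd ψ
  set c : ℂ := (((Real.sqrt d)⁻¹ : ℝ) : ℂ) with hc
  have hc0 : 0 ≤ c := by
    rw [hc]
    exact_mod_cast inv_nonneg.mpr (Real.sqrt_nonneg _)
  have hcc : c * c = (d : ℂ)⁻¹ := by
    rw [hc, ← Complex.ofReal_mul, ← mul_inv, Real.mul_self_sqrt (Nat.cast_nonneg d)]
    simp
  have hA : (xBlock fun x => psdSqrt (thetaR ψ x)).PosSemidef :=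
    posSemidef_xBlock fun x => Matrix.posSemidef_psdSqrt (posSemidef_thetaR ψ x)
  have hB : (xBlock fun _ : Fin d => c • psdSqrt (reducedR ψ)).PosSemidef :=
    posSemidef_xBlock fun _ => (Matrix.posSemidef_psdSqrt hρ).smul hc0
  have hAA : (xBlock fun x => psdSqrt (thetaR ψ x)) * (xBlock fun x => psdSqrt (thetaR ψ x)) =
      cqMarginalX ψ := by
    rw [xBlock_mul hd, cqMarginalX_eq_xBlock]
    simp only [Matrix.psdSqrt_mul_self (posSemidef_thetaR ψ _)]
  have hBB : (xBlock fun _ : Fin d => c • psdSqrt (reducedR ψ)) *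
      (xBlock fun _ : Fin d => c • psdSqrt (reducedR ψ)) = idealKey ψ := by
    rw [xBlock_mul hd, idealKey_eq_xBlock hd]
    simp only [Matrix.smul_mul, Matrix.mul_smul, smul_smul, Matrix.psdSqrt_mul_self hρ, hcc]
  have hps := hA.re_trace_sub_sq_le_traceNorm hB
  have htrA : (cqMarginalX ψ).trace = 1 := by
    rw [cqMarginalX_eq_xBlock, trace_xBlock hd, ← Matrix.trace_sum, sum_thetaR hd, htr]
  have htrB : (idealKey ψ).trace = 1 := by
    have hd0 : (d : ℂ) ≠ 0 := by exact_mod_cast (by lia : d ≠ 0)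
    rw [idealKey_eq_xBlock hd, trace_xBlock hd]
    simp [htr, hd0]
  have htrAB : ((xBlock fun x => psdSqrt (thetaR ψ x)) *
      (xBlock fun _ : Fin d => c • psdSqrt (reducedR ψ))).trace.re =
      (Real.sqrt d)⁻¹ * ((∑ x, psdSqrt (thetaR ψ x)) * psdSqrt (reducedR ψ)).trace.re := by
    rw [xBlock_mul hd, trace_xBlock hd, ← Matrix.trace_sum, Matrix.sum_mul]
    simp only [Matrix.mul_smul]
    rw [← Finset.smul_sum, Matrix.trace_smul, smul_eq_mul, hc, Complex.re_ofReal_mul]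
  rw [Matrix.sub_mul, Matrix.mul_sub, Matrix.mul_sub, hAA, hBB, Matrix.trace_sub,
    Matrix.trace_sub, Matrix.trace_sub, htrA, htrB,
    Matrix.trace_mul_comm (xBlock fun _ : Fin d => c • psdSqrt (reducedR ψ))] at hps
  simp only [Complex.sub_re, Complex.one_re, htrAB] at hps
  rw [pSecure, traceDist]
  linarith

/-- The guessing probability of a measurement dominating `(K z)ᴴ * K z` is at least that of the
incomplete measurement with operators `K z`. -/
theorem sum_norm_sq_mulVec_le_pGuess {m : Type*} [Fintype m] (ψ : Fin d × β × r → ℂ)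
    (K : Fin d → Matrix m β ℂ) (Λ : Fin d → Matrix β β ℂ)
    (hΛ : ∀ z, (Λ z - (K z)ᴴ * K z).PosSemidef) :
    ∑ z, ∑ s, ∑ t, ‖(K z *ᵥ fun b => ψ (z, b, s)) t‖ ^ 2 ≤ pGuess ψ Λ := by
  have hguess : pGuess ψ Λ =
      ∑ z, ∑ s, (star (fun b => ψ (z, b, s)) ⬝ᵥ (Λ z *ᵥ fun b => ψ (z, b, s))).re := by
    simp only [pGuess, ← Complex.re_sum]
    congr 1
    refine Finset.sum_congr rfl fun z _ => ?_
    simp only [dotProduct, Matrix.mulVec, Finset.mul_sum]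
    rw [Finset.sum_comm (γ := r)]
    refine Finset.sum_congr rfl fun b _ => ?_
    rw [Finset.sum_comm]
    refine Finset.sum_congr rfl fun s _ => Finset.sum_congr rfl fun b' _ => ?_
    rw [mul_assoc]
    rfl
  rw [hguess]
  refine Finset.sum_le_sum fun z _ => Finset.sum_le_sum fun s _ => ?_
  set v : β → ℂ := fun b => ψ (z, b, s)
  have h := (hΛ z).re_dotProduct_nonneg v
  rw [Matrix.sub_mulVec, dotProduct_sub, map_sub, sub_nonneg] at h
  refine le_trans (le_of_eq ?_) h
  rw [← Matrix.mulVec_mulVec, Matrix.dotProduct_mulVec, ← Matrix.star_mulVec]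
  simp only [dotProduct, Pi.star_apply, RCLike.star_def, Complex.conj_mul']
  norm_cast

theorem sq_re_trace_mul_le [DecidableEq r] {ρ : Matrix r r ℂ} (hρ : ρ.PosSemidef)
    (htr : ρ.trace = 1) (G : Matrix r r ℂ) :
    (G * psdSqrt ρ).trace.re ^ 2 ≤ ∑ s, ∑ t, ‖G s t‖ ^ 2 := by
  have hnorm : ∑ p : r × r, ‖psdSqrt ρ p.2 p.1‖ ^ 2 = 1 := by
    have h : ((psdSqrt ρ)ᴴ * psdSqrt ρ).trace = 1 := by
      rw [(Matrix.posSemidef_psdSqrt hρ).1, Matrix.psdSqrt_mul_self hρ, htr]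
    simp only [Matrix.trace, Matrix.diag_apply, Matrix.conjTranspose_mul_self_apply_diag] at h
    rw [Fintype.sum_prod_type]
    exact_mod_cast h
  have h := Matrix.norm_sum_mul_le_sqrt_mul_sqrt (fun p : r × r => G p.1 p.2)
    (fun p => psdSqrt ρ p.2 p.1)
  rw [hnorm, Real.sqrt_one, mul_one, Fintype.sum_prod_type, Fintype.sum_prod_type] at h
  have htrace : (G * psdSqrt ρ).trace = ∑ s, ∑ t, G s t * psdSqrt ρ t s := by
    simp only [Matrix.trace, Matrix.diag_apply, Matrix.mul_apply]
  rw [htrace]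
  refine (sq_abs _).symm.trans_le ?_
  exact (Real.le_sqrt (abs_nonneg _) (by positivity)).mp ((Complex.abs_re_le_norm _).trans h)

end Security

section Form

variable {d : ℕ} {β₂ r : Type*}

/-- The matrix of the unnormalised vector `√q_x |ϑ_x⟩`, mapping `B₂` indices to `R` indices. -/
noncomputable def scaledMatrix (q : Fin d → ℝ) (ϑ : Fin d → β₂ × r → ℂ) (x : Fin d) :
    Matrix r β₂ ℂ :=
  Matrix.of fun s b => (Real.sqrt (q x) : ℂ) * ϑ x (b, s)

theorem condVecX_of_form [Fintype β₂] [Fintype r] (hd : 1 ≤ d)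
    {q : Fin d → ℝ} {ϑ : Fin d → β₂ × r → ℂ}
    {ψ : Fin d × (Fin d × β₂) × r → ℂ}
    (hform : ∀ a b₁ b₂ s, ψ (a, (b₁, b₂), s)
        = ∑ x, (Real.sqrt (q x) : ℂ) * xVec d x a * xVec d x b₁ * ϑ x (b₂, s))
    (x b₁ : Fin d) (b₂ : β₂) (s : r) :
    condVecX ψ x ((b₁, b₂), s) = xVec d x b₁ * scaledMatrix q ϑ x s b₂ := by
  have h := sum_xVec_expansion_mul hd (fun y => xVec d y b₁ * scaledMatrix q ϑ y s b₂)
    (Pi.single x 1)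
  simp only [Pi.single_apply, mul_ite, mul_one, mul_zero, Finset.sum_ite_eq',
    Finset.mem_univ, if_true] at h
  rw [← h]
  refine Finset.sum_congr rfl fun z _ => ?_
  rw [mul_comm, hform]
  congr 1
  refine Finset.sum_congr rfl fun y _ => ?_
  simp only [scaledMatrix, Matrix.of_apply]
  ring

theorem thetaR_of_form [Fintype β₂] [Fintype r] (hd : 1 ≤ d)
    {q : Fin d → ℝ} {ϑ : Fin d → β₂ × r → ℂ}
    {ψ : Fin d × (Fin d × β₂) × r → ℂ}
    (hform : ∀ a b₁ b₂ s, ψ (a, (b₁, b₂), s)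
        = ∑ x, (Real.sqrt (q x) : ℂ) * xVec d x a * xVec d x b₁ * ϑ x (b₂, s)) (x : Fin d) :
    thetaR ψ x = scaledMatrix q ϑ x * (scaledMatrix q ϑ x)ᴴ := by
  ext s s'
  have hx : ∑ z, xVec d x z * (starRingEnd ℂ) (xVec d x z) = 1 :=
    (sum_xVec_mul_conj hd x x).trans (if_pos rfl)
  rw [Matrix.mul_apply, ← one_mul (∑ _, _), ← hx, Finset.sum_mul_sum, thetaR, Matrix.of_apply,
    Fintype.sum_prod_type]
  refine Finset.sum_congr rfl fun b₁ _ => Finset.sum_congr rfl fun b₂ _ => ?_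
  rw [condVecX_of_form hd hform, condVecX_of_form hd hform, map_mul, Matrix.conjTranspose_apply,
    RCLike.star_def]
  ring

theorem trace_reducedR_of_form [Fintype β₂] [Fintype r] (hd : 1 ≤ d)
    {q : Fin d → ℝ} (hq0 : ∀ x, 0 ≤ q x)
    (hq1 : ∑ x, q x = 1) {ϑ : Fin d → β₂ × r → ℂ} (hϑ : ∀ x, ∑ t, ‖ϑ x t‖ ^ 2 = 1)
    {ψ : Fin d × (Fin d × β₂) × r → ℂ}
    (hform : ∀ a b₁ b₂ s, ψ (a, (b₁, b₂), s)
        = ∑ x, (Real.sqrt (q x) : ℂ) * xVec d x a * xVec d x b₁ * ϑ x (b₂, s)) :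
    (reducedR ψ).trace = 1 := by
  have htheta : ∀ x, (thetaR ψ x).trace = (q x : ℂ) := fun x => by
    rw [thetaR_of_form hd hform]
    simp only [Matrix.trace, Matrix.diag_apply, Matrix.mul_conjTranspose_self_apply_diag]
    norm_cast
    simp only [scaledMatrix, Matrix.of_apply, norm_mul, mul_pow, Complex.norm_real,
      Real.norm_of_nonneg (Real.sqrt_nonneg _), Real.sq_sqrt (hq0 x), ← Finset.mul_sum]
    rw [Finset.sum_comm, ← Fintype.sum_prod_type (f := fun t => ‖ϑ x t‖ ^ 2), hϑ, mul_one]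
  rw [← sum_thetaR hd, Matrix.trace_sum]
  simp only [htheta]
  exact_mod_cast hq1

/-- The operators `⟨-z| ∑ x, |x̃⟩⟨x̃| ⊗ (C x)ᵀ` of the measurement on `B₁B₂`. -/
noncomputable def guessOp (C : Fin d → Matrix β₂ r ℂ) (z : Fin d) : Matrix r (Fin d × β₂) ℂ :=
  Matrix.of fun t b => ∑ x, (starRingEnd ℂ) (xVec d x b.1) *
    ((starRingEnd ℂ) (xVec d x z) * C x b.2 t)

theorem sum_guessOp [Fintype r] (hd : 1 ≤ d) (C : Fin d → Matrix β₂ r ℂ) :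
    ∑ z, (guessOp C z)ᴴ * guessOp C z = xBlock fun x => (C x * (C x)ᴴ)ᵀ := by
  ext b b'
  rw [Matrix.sum_apply, xBlock_apply]
  simp only [Matrix.mul_apply, Matrix.transpose_apply, Finset.mul_sum]
  rw [Finset.sum_comm]
  conv_rhs => rw [Finset.sum_comm]
  refine Finset.sum_congr rfl fun t _ => ?_
  have h := sum_xVec_expansion_mul hd
    (fun x => xVec d x b.1 * (starRingEnd ℂ) (C x b.2 t))
    (fun x => (starRingEnd ℂ) (xVec d x b'.1) * C x b'.2 t)
  refine Eq.trans (Finset.sum_congr rfl fun z _ => ?_) (h.trans ?_)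
  · simp only [guessOp, Matrix.conjTranspose_apply, Matrix.of_apply, RCLike.star_def, map_sum,
      map_mul, Complex.conj_conj]
    congr 1 <;> exact Finset.sum_congr rfl fun x _ => by ring
  · refine Finset.sum_congr rfl fun x _ => ?_
    rw [Matrix.conjTranspose_apply, RCLike.star_def]
    ring

theorem guessOp_mulVec [Fintype β₂] (hd : 1 ≤ d) {q : Fin d → ℝ} {ϑ : Fin d → β₂ × r → ℂ}
    {ψ : Fin d × (Fin d × β₂) × r → ℂ}
    (hform : ∀ a b₁ b₂ s, ψ (a, (b₁, b₂), s)
        = ∑ x, (Real.sqrt (q x) : ℂ) * xVec d x a * xVec d x b₁ * ϑ x (b₂, s))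
    (C : Fin d → Matrix β₂ r ℂ) (z : Fin d) (s t : r) :
    (guessOp C z *ᵥ fun b => ψ (z, b, s)) t =
      (d : ℂ)⁻¹ * (∑ x, scaledMatrix q ϑ x * C x) s t := by
  have hb : ∀ b₂, ∑ b₁, guessOp C z t (b₁, b₂) * ψ (z, (b₁, b₂), s) =
      (d : ℂ)⁻¹ * ∑ x, scaledMatrix q ϑ x s b₂ * C x b₂ t := fun b₂ => by
    have h := sum_xVec_expansion_mul hd (fun x => xVec d x z * scaledMatrix q ϑ x s b₂)
      (fun x => (starRingEnd ℂ) (xVec d x z) * C x b₂ t)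
    refine Eq.trans (Finset.sum_congr rfl fun b₁ _ => ?_) (h.trans ?_)
    · rw [hform, mul_comm]
      congr 1
      refine Finset.sum_congr rfl fun x _ => ?_
      simp only [scaledMatrix, Matrix.of_apply]
      ring
    · rw [Finset.mul_sum]
      refine Finset.sum_congr rfl fun x _ => ?_
      rw [← xVec_mul_conj_self hd x z]
      ring
  simp only [Matrix.mulVec, dotProduct]
  rw [Fintype.sum_prod_type, Finset.sum_comm]
  simp only [hb, ← Finset.mul_sum]
  rw [Finset.sum_comm, Matrix.sum_apply]
  simp only [Matrix.mul_apply]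

end Form

/-- If H(X^A|B)=0 (the state has the form ∑_x √q_x |x̃⟩_A|x̃⟩_{B₁}|ϑ_x⟩_{B₂R})
and X^A is ε-secure against R, then Z^A is √(2ε)-recoverable from B = B₁B₂. -/
theorem secure_implies_recoverable_caseA {d : ℕ} (hd : 1 ≤ d)
    {β₂ r : Type*} [Fintype β₂] [DecidableEq β₂] [Fintype r] [DecidableEq r]
    (q : Fin d → ℝ) (hq0 : ∀ x, 0 ≤ q x) (hq1 : ∑ x, q x = 1)
    (ϑ : Fin d → β₂ × r → ℂ) (hϑ : ∀ x, ∑ t, ‖ϑ x t‖ ^ 2 = 1)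
    (ψ : Fin d × (Fin d × β₂) × r → ℂ)
    (hform : ∀ a b₁ b₂ s, ψ (a, (b₁, b₂), s)
        = ∑ x, (Real.sqrt (q x) : ℂ) * xVec d x a * xVec d x b₁ * ϑ x (b₂, s))
    (ε : ℝ) (hε0 : 0 ≤ ε)
    (hsec : pSecure ψ ≤ ε) :
    ∃ Λ : Fin d → Matrix (Fin d × β₂) (Fin d × β₂) ℂ,
      (∀ z, (Λ z).PosSemidef) ∧ (∑ z, Λ z = 1) ∧
      1 - Real.sqrt (2 * ε) ≤ pGuess ψ Λ := by
  set G : Matrix r r ℂ := ∑ x, psdSqrt (thetaR ψ x) with hG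
  have htr := trace_reducedR_of_form hd hq0 hq1 hϑ hform
  choose C hC hCC using fun x => Matrix.exists_mul_eq_psdSqrt (scaledMatrix q ϑ x)
  have hGC : ∑ x, scaledMatrix q ϑ x * C x = G := by
    simp only [hG, hC, thetaR_of_form hd hform]
  have hrest : (1 - ∑ z, (guessOp C z)ᴴ * guessOp C z).PosSemidef := by
    have hone : (1 : Matrix (Fin d × β₂) (Fin d × β₂) ℂ) = xBlock fun _ => 1 := by
      rw [xBlock_const hd, Matrix.one_kronecker_one]
    rw [sum_guessOp hd, hone, xBlock_sub]
    refine posSemidef_xBlock fun x => ?_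
    rw [← Matrix.transpose_one, ← Matrix.transpose_sub]
    exact (hCC x).transpose
  let z₀ : Fin d := ⟨0, hd⟩
  let Λ : Fin d → Matrix (Fin d × β₂) (Fin d × β₂) ℂ := fun z =>
    (guessOp C z)ᴴ * guessOp C z +
      if z = z₀ then 1 - ∑ z, (guessOp C z)ᴴ * guessOp C z else 0
  have hΛ : ∀ z, (Λ z - (guessOp C z)ᴴ * guessOp C z).PosSemidef := fun z => by
    simp only [Λ, add_sub_cancel_left]
    split_ifs
    · exact hrest
    · exact Matrix.PosSemidef.zero
  refine ⟨Λ, fun z => ?_, ?_, ?_⟩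
  · simpa using (hΛ z).add (Matrix.posSemidef_conjTranspose_mul_self (guessOp C z))
  · simp [Λ, Finset.sum_add_distrib]
  refine le_trans ?_ (sum_norm_sq_mulVec_le_pGuess ψ (guessOp C) Λ hΛ)
  simp only [guessOp_mulVec hd hform, hGC, norm_mul, mul_pow, ← Finset.mul_sum]
  have hover := one_sub_pSecure_le hd ψ htr
  have hcs := sq_re_trace_mul_le (posSemidef_reducedR hd ψ) htr G
  rw [← hG] at hover
  generalize (G * psdSqrt (reducedR ψ)).trace.re = g at *
  generalize ∑ s, ∑ t, ‖G s t‖ ^ 2 = S at *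
  have hd0 : (0 : ℝ) < d := by exact_mod_cast hd
  have hsum : ‖(d : ℂ)⁻¹‖ ^ 2 * ∑ _z : Fin d, S = (d : ℝ)⁻¹ * S := by
    simp only [Finset.sum_const, Finset.card_univ, Fintype.card_fin, nsmul_eq_mul, norm_inv,
      Complex.norm_natCast]
    field_simp
  rw [hsum]
  have hf : ((Real.sqrt d)⁻¹ * g) ^ 2 ≤ (d : ℝ)⁻¹ * S := by
    rw [mul_pow, inv_pow, Real.sq_sqrt hd0.le]
    gcongr
  refine le_trans ?_ hf
  have hu := Real.sqrt_nonneg (2 * ε)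
  have hu2 := Real.sq_sqrt (by linarith : 0 ≤ 2 * ε)
  generalize (Real.sqrt d)⁻¹ * g = f at *
  generalize Real.sqrt (2 * ε) = u at *
  rcases le_total u 1 with h | h
  · have h1 : 0 ≤ 1 - ε := by nlinarith
    nlinarith
  · nlinarith [sq_nonneg f]
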